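/- Let n >= 1 be an integer and assume mu_1, mu'_1, mu_2, mu'_2 are all unramified. Set alpha_i = mu_i(p)^{-1} * sqrt(p) and beta_i = mu'_i(p)^{-1} / sqrt(p), assume alpha_i ≠ beta_i for i = 1, 2, and put lambda_i = (1 - beta_i/alpha_i)^{-1}. For i = 1, 2 let v_i : G -> C be a function such that v_i(b*g) = mu_i(a) * mu'_i(d) * |a/d|^{1/2} * v_i(g) for every b = [[a,b0],[0,d]] in B and g in G, v_i(g*k) = v_i(g) for every k in K and g in G, and v_i(1) = 1. Let h : G -> C satisfy h(t*g) = chi_1(t) * chi'_2(t) * h(g) for all t in T and g in G, h(j) = 1 for all j in J_n, and h(g) = 0 whenever g is not of the form t*j with t in T and j in J_n; and let H : G × G -> C satisfy H(b_1*g_1, b_2*g_2) = chi_1(b_1) * chi_2(b_2) * delta(b_1*b_2)^{1/2} * H(g_1,g_2) for all b_1, b_2 in B and g_1, g_2 in G, H(g,g) = 0 and H(g, w*g) = h(g) for all g in G. Then for all (g_1,g_2) in G × G: H(g_1,g_2) = lambda_1 * lambda_2 * alpha_1^{-n} * (v_1(g_1*gamma^n) - beta_1 * v_1(g_1*gamma^{n-1}))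 * (v_2(g_2) - alpha_2^{-1} * v_2(g_2*gamma)). -/

import Mathlib

open Matrix

noncomputable section

variable (p : ℕ) [Fact p.Prime]

/-- The underlying matrix of an element of `GL₂(ℚ_p)`. -/
def mat (g : GL (Fin 2) ℚ_[p]) : Matrix (Fin 2) (Fin 2) ℚ_[p] := g

/-- Membership in `K = GL₂(ℤ_p)`: all entries are `p`-adic integers and the
determinant is a unit of `ℤ_p`. -/
def inK (g : GL (Fin 2) ℚ_[p]) : Prop :=
  (∀ i j, ‖mat p g i j‖ ≤ 1) ∧ ‖(mat p g).det‖ = 1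

/-- Membership in the Iwahori subgroup `I_n` of `K`: for `n = 0`, `I_0 = K`;
for `n ≥ 1`, the diagonal entries are units of `ℤ_p` and the lower left entry
lies in `p^n ℤ_p`. -/
def inI (n : ℕ) (g : GL (Fin 2) ℚ_[p]) : Prop :=
  inK p g ∧ (n = 0 ∨
    (‖mat p g 0 0‖ = 1 ∧ ‖mat p g 1 1‖ = 1 ∧ ‖mat p g 1 0‖ ≤ (p : ℝ) ^ (-(n : ℤ))))

/-- `p` as a unit of `ℚ_p`. -/
def pu : ℚ_[p]ˣ :=
  Units.mk0 (p : ℚ_[p]) (by exact_mod_cast (Fact.out : p.Prime).ne_zero)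

/-- The element `γ = diag(p⁻¹, 1)` of `GL₂(ℚ_p)`. -/
def gamma : GL (Fin 2) ℚ_[p] :=
  Matrix.GeneralLinearGroup.mkOfDetNeZero !![(p : ℚ_[p])⁻¹, 0; 0, 1] (by
    have hp : (p : ℚ_[p]) ≠ 0 := by exact_mod_cast (Fact.out : p.Prime).ne_zero
    simp [Matrix.det_fin_two_of, hp])

/-- A character of `ℚ_p^×` is unramified if it is trivial on `ℤ_p^×`. -/
def Unramified (μ : ℚ_[p]ˣ →* ℂˣ) : Prop :=
  ∀ u : ℚ_[p]ˣ, ‖(u : ℚ_[p])‖ = 1 → μ u = 1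

/-- A character of `ℚ_p^×` is trivial on `1 + p^j ℤ_p`. -/
def TrivialOnOnePlusP (j : ℕ) (μ : ℚ_[p]ˣ →* ℂˣ) : Prop :=
  ∀ u : ℚ_[p]ˣ, ‖(u : ℚ_[p]) - 1‖ ≤ (p : ℝ) ^ (-(j : ℤ)) → μ u = 1

/-- The Weyl element `w = [[0,1],[1,0]]` of `GL₂(ℚ_p)`. -/
def wEl : GL (Fin 2) ℚ_[p] :=
  Matrix.GeneralLinearGroup.mkOfDetNeZero !![(0 : ℚ_[p]), 1; 1, 0] (by
    simp [Matrix.det_fin_two_of])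

/-- Membership in the diagonal torus `T` of `GL₂(ℚ_p)`. -/
def inT (g : GL (Fin 2) ℚ_[p]) : Prop := mat p g 1 0 = 0 ∧ mat p g 0 1 = 0

/-- Membership in `J_n = [[1, ℤ_p], [p^n ℤ_p, 1]]`. -/
def inJ (n : ℕ) (g : GL (Fin 2) ℚ_[p]) : Prop :=
  mat p g 0 0 = 1 ∧ mat p g 1 1 = 1 ∧ ‖mat p g 0 1‖ ≤ 1 ∧
    ‖mat p g 1 0‖ ≤ (p : ℝ) ^ (-(n : ℤ))


/-- Value of the inducing character. -/
def phi (μ μ' : ℚ_[p]ˣ →* ℂˣ) (a d : ℚ_[p]ˣ) : ℂ :=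
  (μ a : ℂ) * (μ' d : ℂ) * (Real.sqrt ‖(a : ℚ_[p]) / (d : ℚ_[p])‖ : ℂ)

/-- Build an element of GL2. -/
def mk2 (a b c d : ℚ_[p]) (h : a * d - b * c ≠ 0) : GL (Fin 2) ℚ_[p] :=
  Matrix.GeneralLinearGroup.mkOfDetNeZero !![a, b; c, d] (by
    rw [Matrix.det_fin_two_of]; exact h)

lemma mat_mk2 (a b c d : ℚ_[p]) (h : a * d - b * c ≠ 0) :
    mat p (mk2 p a b c d h) = !![a, b; c, d] := rfl

lemma mat_mul (g h : GL (Fin 2) ℚ_[p]) : mat p (g * h) = mat p g * mat p h := rfl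

lemma mat_inj {g h : GL (Fin 2) ℚ_[p]} (e : mat p g = mat p h) : g = h := Units.ext e

/-- determinant as a unit -/
def dt (g : GL (Fin 2) ℚ_[p]) : ℚ_[p]ˣ := Matrix.GeneralLinearGroup.det g

lemma dt_val (g : GL (Fin 2) ℚ_[p]) :
    ((dt p g : ℚ_[p]ˣ) : ℚ_[p]) = mat p g 0 0 * mat p g 1 1 - mat p g 0 1 * mat p g 1 0 := by
  rw [← Matrix.det_fin_two]; rfl

lemma gamma_pow (m : ℕ) : mat p (gamma p ^ m) = !![((p : ℚ_[p])⁻¹) ^ m, 0; 0, 1] := by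
  induction m with
  | zero => ext i j; fin_cases i <;> fin_cases j <;> simp [mat]
  | succ k ih =>
    rw [pow_succ, mat_mul, ih]
    have : mat p (gamma p) = !![(p : ℚ_[p])⁻¹, 0; 0, 1] := rfl
    rw [this]
    ext i j; fin_cases i <;> fin_cases j <;> simp [pow_succ]

lemma v_low (μ μ' : ℚ_[p]ˣ →* ℂˣ) (v : GL (Fin 2) ℚ_[p] → ℂ)
    (hvB : ∀ (b g : GL (Fin 2) ℚ_[p]) (a d : ℚ_[p]ˣ),
      mat p b 1 0 = 0 → mat p b 0 0 = a → mat p b 1 1 = d →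
      v (b * g) = (μ a : ℂ) * (μ' d : ℂ) *
        (Real.sqrt ‖(a : ℚ_[p]) / (d : ℚ_[p])‖ : ℂ) * v g)
    (hvK : ∀ (g k : GL (Fin 2) ℚ_[p]), inK p k → v (g * k) = v g)
    (hv1 : v 1 = 1) (g : GL (Fin 2) ℚ_[p]) (d : ℚ_[p]ˣ) (hd : mat p g 1 1 = d)
    (hc : ‖mat p g 1 0‖ ≤ ‖(d : ℚ_[p])‖) :
    v g = phi p μ μ' (dt p g / d) d := by
  have hd0 : (d : ℚ_[p]) ≠ 0 := d.ne_zero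
  have hk0 : (1 : ℚ_[p]) * 1 - 0 * (mat p g 1 0 / d) ≠ 0 := by simp
  have hb0 : ((dt p g / d : ℚ_[p]ˣ) : ℚ_[p]) * d - mat p g 0 1 * 0 ≠ 0 := by simp
  have e : g = mk2 p _ _ _ _ hb0 * mk2 p _ _ _ _ hk0 := by
    apply mat_inj
    rw [mat_mul, mat_mk2, mat_mk2]
    ext i j
    fin_cases i <;> fin_cases j <;> simp [dt_val, hd] <;> field_simp <;> ring
  have hk : inK p (mk2 p _ _ _ _ hk0) := by
    constructor
    · intro i j
      rw [mat_mk2]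
      fin_cases i <;> fin_cases j <;> simp
      exact div_le_one_of_le₀ hc (norm_nonneg _)
    · rw [mat_mk2, Matrix.det_fin_two_of]; simp
  have h1 := hvB (mk2 p _ _ _ _ hb0) 1 (dt p g / d) d rfl rfl rfl
  rw [mul_one, hv1, mul_one] at h1
  calc v g = v (mk2 p _ _ _ _ hb0 * mk2 p _ _ _ _ hk0) := congrArg v e
    _ = _ := by rw [hvK _ _ hk, h1, phi]

lemma v_high (μ μ' : ℚ_[p]ˣ →* ℂˣ) (v : GL (Fin 2) ℚ_[p] → ℂ)
    (hvB : ∀ (b g : GL (Fin 2) ℚ_[p]) (a d : ℚ_[p]ˣ),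
      mat p b 1 0 = 0 → mat p b 0 0 = a → mat p b 1 1 = d →
      v (b * g) = (μ a : ℂ) * (μ' d : ℂ) *
        (Real.sqrt ‖(a : ℚ_[p]) / (d : ℚ_[p])‖ : ℂ) * v g)
    (hvK : ∀ (g k : GL (Fin 2) ℚ_[p]), inK p k → v (g * k) = v g)
    (hv1 : v 1 = 1) (g : GL (Fin 2) ℚ_[p]) (c : ℚ_[p]ˣ) (hc : mat p g 1 0 = c)
    (hd : ‖mat p g 1 1‖ ≤ ‖(c : ℚ_[p])‖) :
    v g = phi p μ μ' (dt p g / c) c := by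
  have hc0 : (c : ℚ_[p]) ≠ 0 := c.ne_zero
  have hk0 : (0 : ℚ_[p]) * (mat p g 1 1 / c) - (-1) * 1 ≠ 0 := by simp
  have hb0 : ((dt p g / c : ℚ_[p]ˣ) : ℚ_[p]) * c - mat p g 0 0 * 0 ≠ 0 := by simp
  have e : g = mk2 p _ _ _ _ hb0 * mk2 p _ _ _ _ hk0 := by
    apply mat_inj
    rw [mat_mul, mat_mk2, mat_mk2]
    ext i j
    fin_cases i <;> fin_cases j <;> simp [dt_val, hc] <;> field_simp <;> ring
  have hk : inK p (mk2 p _ _ _ _ hk0) := by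
    constructor
    · intro i j
      rw [mat_mk2]
      fin_cases i <;> fin_cases j <;> simp
      exact div_le_one_of_le₀ hd (norm_nonneg _)
    · rw [mat_mk2, Matrix.det_fin_two_of]; simp
  have h1 := hvB (mk2 p _ _ _ _ hb0) 1 (dt p g / c) c rfl rfl rfl
  rw [mul_one, hv1, mul_one] at h1
  calc v g = v (mk2 p _ _ _ _ hb0 * mk2 p _ _ _ _ hk0) := congrArg v e
    _ = _ := by rw [hvK _ _ hk, h1, phi]

lemma pu_val : ((pu p : ℚ_[p]ˣ) : ℚ_[p]) = p := rfl

lemma mat_gam (g : GL (Fin 2) ℚ_[p]) (m : ℕ) :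
    mat p (g * gamma p ^ m) 1 0 = mat p g 1 0 * ((p : ℚ_[p])⁻¹) ^ m ∧
    mat p (g * gamma p ^ m) 1 1 = mat p g 1 1 ∧
    dt p (g * gamma p ^ m) = dt p g / pu p ^ m := by
  refine ⟨?_, ?_, ?_⟩
  · rw [mat_mul, gamma_pow]; simp [Matrix.mul_apply, Fin.sum_univ_two]
  · rw [mat_mul, gamma_pow]; simp [Matrix.mul_apply, Fin.sum_univ_two]
  · apply Units.ext
    rw [dt_val, mat_mul, gamma_pow]
    simp [Matrix.mul_apply, Fin.sum_univ_two, dt_val, pu_val]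
    field_simp

lemma phi_left (μ μ' : ℚ_[p]ˣ →* ℂˣ) (α : ℂ)
    (hα : α = ((μ (pu p) : ℂ))⁻¹ * (Real.sqrt p : ℂ)) (a d : ℚ_[p]ˣ) (m : ℕ) :
    phi p μ μ' (a / pu p ^ m) d = α ^ m * phi p μ μ' a d := by
  have : ‖((a / pu p ^ m : ℚ_[p]ˣ) : ℚ_[p]) / d‖ = (p : ℝ) ^ m * ‖(a : ℚ_[p]) / d‖ := by
    simp [pu_val]; ring
  have hs : ∀ m : ℕ, Real.sqrt ((p : ℝ) ^ m) = (Real.sqrt p) ^ m := by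
    intro m
    rw [Real.sqrt_eq_iff_mul_self_eq (by positivity) (by positivity), ← mul_pow,
      Real.mul_self_sqrt (by positivity)]
  rw [phi, phi, this, Real.sqrt_mul (by positivity), hs, hα]
  simp [mul_pow]
  field_simp

lemma phi_right (μ μ' : ℚ_[p]ˣ →* ℂˣ) (β : ℂ)
    (hβ : β = ((μ' (pu p) : ℂ))⁻¹ / (Real.sqrt p : ℂ)) (a d : ℚ_[p]ˣ) (m : ℕ) :
    phi p μ μ' a (d / pu p ^ m) = β ^ m * phi p μ μ' a d := by
  have : ‖(a : ℚ_[p]) / ((d / pu p ^ m : ℚ_[p]ˣ) : ℚ_[p])‖ = ‖(a : ℚ_[p]) / d‖ / (p : ℝ) ^ m := by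
    simp [pu_val]; field_simp
  have hs : ∀ m : ℕ, Real.sqrt ((p : ℝ) ^ m) = (Real.sqrt p) ^ m := by
    intro m
    rw [Real.sqrt_eq_iff_mul_self_eq (by positivity) (by positivity), ← mul_pow,
      Real.mul_self_sqrt (by positivity)]
  rw [phi, phi, this, Real.sqrt_div (by positivity), hs, hβ]
  simp [mul_pow, div_pow]
  field_simp

lemma vg_low (μ μ' : ℚ_[p]ˣ →* ℂˣ) (v : GL (Fin 2) ℚ_[p] → ℂ) (α : ℂ)
    (hα : α = ((μ (pu p) : ℂ))⁻¹ * (Real.sqrt p : ℂ))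
    (hvB : ∀ (b g : GL (Fin 2) ℚ_[p]) (a d : ℚ_[p]ˣ),
      mat p b 1 0 = 0 → mat p b 0 0 = a → mat p b 1 1 = d →
      v (b * g) = (μ a : ℂ) * (μ' d : ℂ) *
        (Real.sqrt ‖(a : ℚ_[p]) / (d : ℚ_[p])‖ : ℂ) * v g)
    (hvK : ∀ (g k : GL (Fin 2) ℚ_[p]), inK p k → v (g * k) = v g)
    (hv1 : v 1 = 1) (g : GL (Fin 2) ℚ_[p]) (d : ℚ_[p]ˣ) (hd : mat p g 1 1 = d) (m : ℕ)
    (hc : ‖mat p g 1 0‖ * (p : ℝ) ^ m ≤ ‖(d : ℚ_[p])‖) :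
    v (g * gamma p ^ m) = α ^ m * phi p μ μ' (dt p g / d) d := by
  obtain ⟨h1, h2, h3⟩ := mat_gam p g m
  rw [v_low p μ μ' v hvB hvK hv1 _ d (h2.trans hd) (by rw [h1]; simpa using hc), h3,
    div_right_comm, phi_left p μ μ' α hα]

lemma vg_high (μ μ' : ℚ_[p]ˣ →* ℂˣ) (v : GL (Fin 2) ℚ_[p] → ℂ) (β : ℂ)
    (hβ : β = ((μ' (pu p) : ℂ))⁻¹ / (Real.sqrt p : ℂ))
    (hvB : ∀ (b g : GL (Fin 2) ℚ_[p]) (a d : ℚ_[p]ˣ),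
      mat p b 1 0 = 0 → mat p b 0 0 = a → mat p b 1 1 = d →
      v (b * g) = (μ a : ℂ) * (μ' d : ℂ) *
        (Real.sqrt ‖(a : ℚ_[p]) / (d : ℚ_[p])‖ : ℂ) * v g)
    (hvK : ∀ (g k : GL (Fin 2) ℚ_[p]), inK p k → v (g * k) = v g)
    (hv1 : v 1 = 1) (g : GL (Fin 2) ℚ_[p]) (c : ℚ_[p]ˣ) (hc : mat p g 1 0 = c) (m : ℕ)
    (hd : ‖mat p g 1 1‖ ≤ ‖(c : ℚ_[p])‖ * (p : ℝ) ^ m) :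
    v (g * gamma p ^ m) = β ^ m * phi p μ μ' (dt p g / c) c := by
  obtain ⟨h1, h2, h3⟩ := mat_gam p g m
  rw [v_high p μ μ' v hvB hvK hv1 _ (c / pu p ^ m) (by rw [h1, hc]; simp [pu_val]; rfl)
    (by rw [h2]; simpa [pu_val] using hd), h3,
    div_div_div_cancel_right, phi_right p μ μ' β hβ]

lemma norm_step (x y : ℚ_[p]) (m : ℕ) (hx : ¬ ‖x‖ * (p : ℝ) ^ (m + 1) ≤ ‖y‖) :
    ‖y‖ ≤ ‖x‖ * (p : ℝ) ^ m := by
  have hp : (0 : ℝ) < p := by exact_mod_cast (Fact.out : p.Prime).pos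
  have hp1 : (1 : ℝ) < p := by exact_mod_cast (Fact.out : p.Prime).one_lt
  push Not at hx
  by_cases hy : y = 0
  · subst hy; simp; positivity
  by_cases hx0 : x = 0
  · subst hx0; simp at hx; exact absurd hx (not_lt.2 (norm_nonneg _))
  rw [Padic.norm_eq_zpow_neg_valuation hy, Padic.norm_eq_zpow_neg_valuation hx0] at *
  rw [← zpow_natCast, ← zpow_add₀ hp.ne', zpow_lt_zpow_iff_right₀ hp1] at hx
  rw [← zpow_natCast, ← zpow_add₀ hp.ne', zpow_le_zpow_iff_right₀ hp1]
  push_cast at hx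
  omega

lemma unram_eq (μ : ℚ_[p]ˣ →* ℂˣ) (hμ : Unramified p μ) (x y : ℚ_[p]ˣ)
    (e : ‖(x : ℚ_[p])‖ = ‖(y : ℚ_[p])‖) : μ x = μ y := by
  have := hμ (x / y) (by simp [e])
  rwa [map_div, div_eq_one] at this

lemma same_row (g g' : GL (Fin 2) ℚ_[p]) (h0 : mat p g 1 0 = mat p g' 1 0)
    (h1 : mat p g 1 1 = mat p g' 1 1) :
    ∃ b, g = b * g' ∧ mat p b 1 0 = 0 ∧ mat p b 0 0 = ((dt p g / dt p g' : ℚ_[p]ˣ) : ℚ_[p]) ∧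
      mat p b 1 1 = ((1 : ℚ_[p]ˣ) : ℚ_[p]) := by
  have hne : ((dt p g' : ℚ_[p]ˣ) : ℚ_[p]) ≠ 0 := Units.ne_zero _
  have hne' := hne
  rw [dt_val] at hne'
  have hb0 : ((dt p g / dt p g' : ℚ_[p]ˣ) : ℚ_[p]) * 1 -
    ((mat p g' 0 0 * mat p g 0 1 - mat p g 0 0 * mat p g' 0 1) / (dt p g' : ℚ_[p])) * 0 ≠ 0 := by
    simp
  refine ⟨mk2 p _ _ _ _ hb0, ?_, rfl, rfl, rfl⟩
  apply mat_inj
  rw [mat_mul, mat_mk2]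
  ext i j
  fin_cases i <;> fin_cases j <;>
    simp [h0, h1, Matrix.mul_apply, Fin.sum_univ_two] <;> field_simp <;>
    simp only [dt_val, h0, h1] <;> ring

lemma prop_row (g g' : GL (Fin 2) ℚ_[p])
    (h0 : mat p g 1 0 * mat p g' 1 1 - mat p g 1 1 * mat p g' 1 0 = 0) :
    ∃ b, ∃ a d : ℚ_[p]ˣ, g = b * g' ∧ mat p b 1 0 = 0 ∧ mat p b 0 0 = a ∧
      mat p b 1 1 = d := by
  have e : g = (g * g'⁻¹) * g' := by simp
  have hz : mat p (g * g'⁻¹) 1 0 = 0 := by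
    have hm : mat p g'⁻¹ = (mat p g')⁻¹ := Matrix.coe_units_inv g'
    rw [mat_mul, hm, Matrix.inv_def, Matrix.adjugate_fin_two]
    simp [Matrix.mul_apply, Fin.sum_univ_two]
    linear_combination ((mat p g').det⁻¹) * h0
  have hD : ((dt p (g * g'⁻¹) : ℚ_[p]ˣ) : ℚ_[p]) ≠ 0 := Units.ne_zero _
  rw [dt_val, hz, mul_zero, sub_zero] at hD
  exact ⟨g * g'⁻¹, Units.mk0 _ (left_ne_zero_of_mul hD), Units.mk0 _ (right_ne_zero_of_mul hD),
    e, hz, rfl, rfl⟩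

/-- Lemma «calcul-H» in the unramified case: `H = ext(h)` equals
`lam₁ lam₂ α₁^{-n} · (γ^n v₁ - β₁ γ^{n-1} v₁) ⊗ (v₂ - α₂⁻¹ γ v₂)`,
where `v₁, v₂` are the normalized spherical vectors of the unramified
principal series `Ind_B^G (μᵢ ⊗ μ'ᵢ)`. -/
theorem stmt12 (n : ℕ) (hn : 1 ≤ n)
    (μ₁ μ'₁ μ₂ μ'₂ : ℚ_[p]ˣ →* ℂˣ)
    (hμ₁ : Unramified p μ₁) (hμ'₁ : Unramified p μ'₁)
    (hμ₂ : Unramified p μ₂) (hμ'₂ : Unramified p μ'₂)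
    (α₁ β₁ α₂ β₂ lam₁ lam₂ : ℂ)
    (hα₁ : α₁ = ((μ₁ (pu p) : ℂ))⁻¹ * (Real.sqrt p : ℂ))
    (hβ₁ : β₁ = ((μ'₁ (pu p) : ℂ))⁻¹ / (Real.sqrt p : ℂ))
    (hα₂ : α₂ = ((μ₂ (pu p) : ℂ))⁻¹ * (Real.sqrt p : ℂ))
    (hβ₂ : β₂ = ((μ'₂ (pu p) : ℂ))⁻¹ / (Real.sqrt p : ℂ))
    (hne₁ : α₁ ≠ β₁) (hne₂ : α₂ ≠ β₂)
    (hlam₁ : lam₁ = (1 - β₁ / α₁)⁻¹) (hlam₂ : lam₂ = (1 - β₂ / α₂)⁻¹)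
    (v₁ v₂ : GL (Fin 2) ℚ_[p] → ℂ)
    (hv₁B : ∀ (b g : GL (Fin 2) ℚ_[p]) (a d : ℚ_[p]ˣ),
      mat p b 1 0 = 0 → mat p b 0 0 = a → mat p b 1 1 = d →
      v₁ (b * g) = (μ₁ a : ℂ) * (μ'₁ d : ℂ) *
        (Real.sqrt ‖(a : ℚ_[p]) / (d : ℚ_[p])‖ : ℂ) * v₁ g)
    (hv₁K : ∀ (g k : GL (Fin 2) ℚ_[p]), inK p k → v₁ (g * k) = v₁ g)
    (hv₁1 : v₁ 1 = 1)
    (hv₂B : ∀ (b g : GL (Fin 2) ℚ_[p]) (a d : ℚ_[p]ˣ),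
      mat p b 1 0 = 0 → mat p b 0 0 = a → mat p b 1 1 = d →
      v₂ (b * g) = (μ₂ a : ℂ) * (μ'₂ d : ℂ) *
        (Real.sqrt ‖(a : ℚ_[p]) / (d : ℚ_[p])‖ : ℂ) * v₂ g)
    (hv₂K : ∀ (g k : GL (Fin 2) ℚ_[p]), inK p k → v₂ (g * k) = v₂ g)
    (hv₂1 : v₂ 1 = 1)
    (h : GL (Fin 2) ℚ_[p] → ℂ)
    (hhT : ∀ (t g : GL (Fin 2) ℚ_[p]) (a d : ℚ_[p]ˣ),
      inT p t → mat p t 0 0 = a → mat p t 1 1 = d →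
      h (t * g) = (μ₁ a : ℂ) * (μ'₁ d : ℂ) * (μ'₂ a : ℂ) * (μ₂ d : ℂ) * h g)
    (hhJ : ∀ j : GL (Fin 2) ℚ_[p], inJ p n j → h j = 1)
    (hhsupp : ∀ g : GL (Fin 2) ℚ_[p],
      (¬ ∃ t j : GL (Fin 2) ℚ_[p], inT p t ∧ inJ p n j ∧ g = t * j) → h g = 0)
    (H : GL (Fin 2) ℚ_[p] → GL (Fin 2) ℚ_[p] → ℂ)
    (hHB : ∀ (b₁ b₂ g₁ g₂ : GL (Fin 2) ℚ_[p]) (a₁ d₁ a₂ d₂ : ℚ_[p]ˣ),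
      mat p b₁ 1 0 = 0 → mat p b₁ 0 0 = a₁ → mat p b₁ 1 1 = d₁ →
      mat p b₂ 1 0 = 0 → mat p b₂ 0 0 = a₂ → mat p b₂ 1 1 = d₂ →
      H (b₁ * g₁) (b₂ * g₂) =
        (μ₁ a₁ : ℂ) * (μ'₁ d₁ : ℂ) * (μ₂ a₂ : ℂ) * (μ'₂ d₂ : ℂ) *
          (Real.sqrt ‖((a₁ : ℚ_[p]) * (a₂ : ℚ_[p])) /
            ((d₁ : ℚ_[p]) * (d₂ : ℚ_[p]))‖ : ℂ) * H g₁ g₂)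
    (hHdiag : ∀ g : GL (Fin 2) ℚ_[p], H g g = 0)
    (hHw : ∀ g : GL (Fin 2) ℚ_[p], H g (wEl p * g) = h g) :
    ∀ g₁ g₂ : GL (Fin 2) ℚ_[p],
      H g₁ g₂ = lam₁ * lam₂ * α₁ ^ (-(n : ℤ)) *
        (v₁ (g₁ * gamma p ^ n) - β₁ * v₁ (g₁ * gamma p ^ (n - 1))) *
        (v₂ g₂ - α₂⁻¹ * v₂ (g₂ * gamma p)) := by
  intro g₁ g₂
  have hα₁0 : α₁ ≠ 0 := by
    rw [hα₁]
    have : (Real.sqrt p : ℂ) ≠ 0 := by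
      have : (0 : ℝ) < p := by exact_mod_cast (Fact.out : p.Prime).pos
      exact_mod_cast (Real.sqrt_pos.2 this).ne'
    simp [this]
  have hα₂0 : α₂ ≠ 0 := by
    rw [hα₂]
    have : (Real.sqrt p : ℂ) ≠ 0 := by
      have : (0 : ℝ) < p := by exact_mod_cast (Fact.out : p.Prime).pos
      exact_mod_cast (Real.sqrt_pos.2 this).ne'
    simp [this]
  have hp0 : (0 : ℝ) < p := by exact_mod_cast (Fact.out : p.Prime).pos
  have hp1 : (1 : ℝ) < p := by exact_mod_cast (Fact.out : p.Prime).one_lt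
  have hl₁ : α₁ - β₁ ≠ 0 := sub_ne_zero.2 hne₁
  have hl₂ : α₂ - β₂ ≠ 0 := sub_ne_zero.2 hne₂
  obtain ⟨k, rfl⟩ : ∃ k, n = k + 1 := ⟨n - 1, by omega⟩
  simp only [Nat.add_sub_cancel]
  have row : ∀ g : GL (Fin 2) ℚ_[p], mat p g 1 0 = 0 → mat p g 1 1 = 0 → False := by
    intro g h0 h1
    have := (dt p g).ne_zero
    rw [dt_val, h0, h1] at this
    simp at this
  -- first factor
  have F1low : ∀ d : ℚ_[p]ˣ, mat p g₁ 1 1 = d →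
      ‖mat p g₁ 1 0‖ * (p : ℝ) ^ (k + 1) ≤ ‖mat p g₁ 1 1‖ →
      lam₁ * α₁ ^ (-((k + 1 : ℕ) : ℤ)) *
        (v₁ (g₁ * gamma p ^ (k + 1)) - β₁ * v₁ (g₁ * gamma p ^ k)) =
        phi p μ₁ μ'₁ (dt p g₁ / d) d := by
    intro d hd hc
    rw [hd] at hc
    rw [vg_low p μ₁ μ'₁ v₁ α₁ hα₁ hv₁B hv₁K hv₁1 g₁ d hd _ hc,
      vg_low p μ₁ μ'₁ v₁ α₁ hα₁ hv₁B hv₁K hv₁1 g₁ d hd k (le_trans (by gcongr; exact hp1.le; omega) hc),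
      hlam₁, _root_.zpow_neg, zpow_natCast]
    field_simp
    ring
  have F1high : ¬ ‖mat p g₁ 1 0‖ * (p : ℝ) ^ (k + 1) ≤ ‖mat p g₁ 1 1‖ →
      v₁ (g₁ * gamma p ^ (k + 1)) - β₁ * v₁ (g₁ * gamma p ^ k) = 0 := by
    intro hc
    have hc0 : mat p g₁ 1 0 ≠ 0 := by
      intro h0; apply hc; rw [h0]; simp
    have hs := norm_step p _ _ _ hc
    rw [vg_high p μ₁ μ'₁ v₁ β₁ hβ₁ hv₁B hv₁K hv₁1 g₁ (Units.mk0 _ hc0) rfl _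
        (by push Not at hc; exact hc.le),
      vg_high p μ₁ μ'₁ v₁ β₁ hβ₁ hv₁B hv₁K hv₁1 g₁ (Units.mk0 _ hc0) rfl k hs]
    ring
  have F2high : ∀ c : ℚ_[p]ˣ, mat p g₂ 1 0 = c → ‖mat p g₂ 1 1‖ ≤ ‖mat p g₂ 1 0‖ →
      lam₂ * (v₂ g₂ - α₂⁻¹ * v₂ (g₂ * gamma p)) = phi p μ₂ μ'₂ (dt p g₂ / c) c := by
    intro c hc hd
    rw [hc] at hd
    have e0 := vg_high p μ₂ μ'₂ v₂ β₂ hβ₂ hv₂B hv₂K hv₂1 g₂ c hc 0 (by simpa using hd)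
    have e1 := vg_high p μ₂ μ'₂ v₂ β₂ hβ₂ hv₂B hv₂K hv₂1 g₂ c hc 1
      (hd.trans (le_mul_of_one_le_right (norm_nonneg _) (by simpa using hp1.le)))
    rw [pow_zero, pow_zero, mul_one, one_mul] at e0
    rw [pow_one, pow_one] at e1
    rw [e0, e1, hlam₂]
    field_simp
  have F2low : ¬ ‖mat p g₂ 1 1‖ ≤ ‖mat p g₂ 1 0‖ →
      v₂ g₂ - α₂⁻¹ * v₂ (g₂ * gamma p) = 0 := by
    intro hd
    have hd0 : mat p g₂ 1 1 ≠ 0 := by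
      intro h0; apply hd; rw [h0]; simp
    have hs : ‖mat p g₂ 1 0‖ * (p : ℝ) ^ (0 + 1) ≤ ‖mat p g₂ 1 1‖ := by
      by_contra hcon
      exact hd (by simpa using norm_step p _ _ _ hcon)
    have e0 := vg_low p μ₂ μ'₂ v₂ α₂ hα₂ hv₂B hv₂K hv₂1 g₂ (Units.mk0 _ hd0) rfl 0
      (by push Not at hd; simpa using hd.le)
    have e1 := vg_low p μ₂ μ'₂ v₂ α₂ hα₂ hv₂B hv₂K hv₂1 g₂ (Units.mk0 _ hd0) rfl 1 hs
    rw [pow_zero, pow_zero, mul_one, one_mul] at e0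
    rw [pow_one, pow_one] at e1
    rw [e0, e1]
    field_simp
    ring
  -- reduction to h
  have Hred : ∀ hΔ : mat p g₂ 1 0 * mat p g₁ 1 1 - mat p g₂ 1 1 * mat p g₁ 1 0 ≠ 0,
      ∃ Δ' : ℚ_[p]ˣ, ‖(Δ' : ℚ_[p])‖ = ‖mat p g₂ 1 0 * mat p g₁ 1 1 - mat p g₂ 1 1 * mat p g₁ 1 0‖ ∧
      H g₁ g₂ = (μ₁ (dt p g₁ / Units.mk0 _ hΔ) : ℂ) * (μ₂ (dt p g₂ / Δ') : ℂ) *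
        (Real.sqrt ‖((dt p g₁ / Units.mk0 _ hΔ : ℚ_[p]ˣ) : ℚ_[p]) *
          ((dt p g₂ / Δ' : ℚ_[p]ˣ) : ℚ_[p])‖ : ℂ) * h (mk2 p _ _ _ _ hΔ) := by
    intro hΔ
    have hw : mat p (wEl p) = !![0, 1; 1, 0] := rfl
    obtain ⟨b₁, e1, h10, h00, h11⟩ := same_row p g₁ (mk2 p _ _ _ _ hΔ) rfl rfl
    obtain ⟨b₂, e2, k10, k00, k11⟩ := same_row p g₂ (wEl p * mk2 p _ _ _ _ hΔ)
      (by rw [mat_mul, hw, mat_mk2]; simp) (by rw [mat_mul, hw, mat_mk2]; simp)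
    have hd : dt p (mk2 p _ _ _ _ hΔ) = Units.mk0 _ hΔ := by
      apply Units.ext; rw [dt_val, mat_mk2]; simp
    refine ⟨dt p (wEl p * mk2 p _ _ _ _ hΔ), ?_, ?_⟩
    · rw [dt_val, mat_mul, hw, mat_mk2, ← norm_neg]
      simp
      congr 1; ring
    · have := hHB b₁ b₂ (mk2 p _ _ _ _ hΔ) (wEl p * mk2 p _ _ _ _ hΔ) _ _ _ _ h10 h00 h11 k10 k00 k11
      rw [← e1, ← e2, hHw, hd] at this
      rw [this]
      simp
  by_cases hA : ‖mat p g₁ 1 0‖ * (p : ℝ) ^ (k + 1) ≤ ‖mat p g₁ 1 1‖ ∧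
      ‖mat p g₂ 1 1‖ ≤ ‖mat p g₂ 1 0‖
  · obtain ⟨hA1, hA2⟩ := hA
    have hpk : (1 : ℝ) < (p : ℝ) ^ (k + 1) := one_lt_pow₀ hp1 (by omega)
    have hd0 : mat p g₁ 1 1 ≠ 0 := by
      intro h0
      rw [h0, norm_zero] at hA1
      have : ‖mat p g₁ 1 0‖ = 0 := by nlinarith [norm_nonneg (mat p g₁ 1 0)]
      exact row _ (norm_eq_zero.1 this) h0
    have hc0 : mat p g₂ 1 0 ≠ 0 := by
      intro h0
      rw [h0, norm_zero] at hA2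
      exact row _ h0 (norm_le_zero_iff.1 hA2)
    have hlt : ‖mat p g₂ 1 1 * mat p g₁ 1 0‖ < ‖mat p g₂ 1 0 * mat p g₁ 1 1‖ := by
      have hpos : 0 < ‖mat p g₂ 1 0‖ := norm_pos_iff.2 hc0
      have hpos' : 0 < ‖mat p g₁ 1 1‖ := norm_pos_iff.2 hd0
      have : ‖mat p g₁ 1 0‖ < ‖mat p g₁ 1 1‖ := by
        nlinarith [norm_nonneg (mat p g₁ 1 0)]
      rw [norm_mul, norm_mul]
      nlinarith [norm_nonneg (mat p g₁ 1 0)]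
    have hΔn : ‖mat p g₂ 1 0 * mat p g₁ 1 1 - mat p g₂ 1 1 * mat p g₁ 1 0‖ =
        ‖mat p g₂ 1 0 * mat p g₁ 1 1‖ :=
      by
      have := Padic.add_eq_max_of_ne (p := p) (q := mat p g₂ 1 0 * mat p g₁ 1 1)
        (r := -(mat p g₂ 1 1 * mat p g₁ 1 0)) (by rw [norm_neg]; exact hlt.ne')
      rw [sub_eq_add_neg, this, norm_neg, max_eq_left hlt.le]
    have hΔ : mat p g₂ 1 0 * mat p g₁ 1 1 - mat p g₂ 1 1 * mat p g₁ 1 0 ≠ 0 := by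
      rw [← norm_ne_zero_iff, hΔn, norm_ne_zero_iff]
      exact mul_ne_zero hc0 hd0
    obtain ⟨Δ', hΔ', hH⟩ := Hred hΔ
    obtain ⟨d, hd⟩ : ∃ d : ℚ_[p]ˣ, mat p g₁ 1 1 = d := ⟨Units.mk0 _ hd0, rfl⟩
    obtain ⟨c, hc⟩ : ∃ c : ℚ_[p]ˣ, mat p g₂ 1 0 = c := ⟨Units.mk0 _ hc0, rfl⟩
    have f1 := F1low d hd hA1
    have f2 := F2high c hc hA2
    have hh : h (mk2 p _ _ _ _ hΔ) = (μ₁ c : ℂ) * (μ'₁ d : ℂ) * (μ'₂ c : ℂ) * (μ₂ d : ℂ) := by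
      have ht0 : (c : ℚ_[p]) * d - 0 * 0 ≠ 0 := by simp
      have hj0 : (1 : ℚ_[p]) * 1 - (mat p g₂ 1 1 / c) * (mat p g₁ 1 0 / d) ≠ 0 := by
        intro h0
        apply hΔ
        rw [hc, hd]
        have hcc := c.ne_zero
        have hdd := d.ne_zero
        field_simp at h0
        linear_combination h0
      have e : mk2 p _ _ _ _ hΔ = mk2 p _ _ _ _ ht0 * mk2 p _ _ _ _ hj0 := by
        apply mat_inj
        rw [mat_mul, mat_mk2, mat_mk2, mat_mk2]
        ext i j
        fin_cases i <;> fin_cases j <;> simp [hc, hd] <;> field_simp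
      rw [e, hhT _ _ c d ⟨rfl, rfl⟩ rfl rfl, hhJ, mul_one]
      refine ⟨rfl, rfl, ?_, ?_⟩
      · rw [mat_mk2]
        simp
        rw [hc] at hA2
        exact div_le_one_of_le₀ hA2 (norm_nonneg _)
      · rw [mat_mk2]
        simp only [of_apply, cons_val', cons_val_zero, cons_val_one, cons_val_fin_one, norm_div]
        rw [hd] at hA1
        rw [div_le_iff₀ (norm_pos_iff.2 d.ne_zero), _root_.zpow_neg, zpow_natCast, inv_mul_eq_div,
          le_div_iff₀ (by positivity)]
        exact hA1
    have m1 : μ₁ (Units.mk0 _ hΔ) = μ₁ (c * d) := unram_eq p μ₁ hμ₁ _ _ (by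
      rw [Units.val_mk0, hΔn, hc, hd, Units.val_mul])
    have m2 : μ₂ Δ' = μ₂ (c * d) := unram_eq p μ₂ hμ₂ _ _ (by
      rw [hΔ', hΔn, hc, hd, Units.val_mul])
    have hsq : ‖((dt p g₁ / Units.mk0 _ hΔ : ℚ_[p]ˣ) : ℚ_[p]) *
          ((dt p g₂ / Δ' : ℚ_[p]ˣ) : ℚ_[p])‖ =
        ‖((dt p g₁ / d : ℚ_[p]ˣ) : ℚ_[p]) / d‖ * ‖((dt p g₂ / c : ℚ_[p]ˣ) : ℚ_[p]) / c‖ := by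
      have hN := hΔn
      rw [norm_mul (mat p g₂ 1 0) (mat p g₁ 1 1), congrArg norm hc, congrArg norm hd] at hN
      simp only [Units.val_div_eq_div_val, Units.val_mk0, norm_mul, norm_div, hΔ', hN]
      have hcc : ‖(c : ℚ_[p])‖ ≠ 0 := norm_ne_zero_iff.2 c.ne_zero
      have hdd : ‖(d : ℚ_[p])‖ ≠ 0 := norm_ne_zero_iff.2 d.ne_zero
      field_simp
    rw [hH, hh, hsq, Real.sqrt_mul (norm_nonneg _)]
    trans (phi p μ₁ μ'₁ (dt p g₁ / d) d) * (phi p μ₂ μ'₂ (dt p g₂ / c) c)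
    · rw [phi, phi]
      simp only [map_div, m1, m2, map_mul, Units.val_div_eq_div_val, Units.val_mul,
        Complex.ofReal_mul]
      field_simp
    · rw [← f1, ← f2]; ring
  · have R : lam₁ * lam₂ * α₁ ^ (-((k + 1 : ℕ) : ℤ)) *
        (v₁ (g₁ * gamma p ^ (k + 1)) - β₁ * v₁ (g₁ * gamma p ^ k)) *
        (v₂ g₂ - α₂⁻¹ * v₂ (g₂ * gamma p)) = 0 := by
      rw [not_and_or] at hA
      rcases hA with hA | hA
      · rw [F1high hA]; ring
      · rw [F2low hA]; ring
    rw [R]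
    by_cases hΔ : mat p g₂ 1 0 * mat p g₁ 1 1 - mat p g₂ 1 1 * mat p g₁ 1 0 = 0
    · obtain ⟨b, a, d, e, h10, h00, h11⟩ := prop_row p g₂ g₁ hΔ
      have := hHB 1 b g₁ g₁ 1 1 a d (by simp [mat]) (by simp [mat]) (by simp [mat]) h10 h00 h11
      rw [← e, one_mul, hHdiag, mul_zero] at this
      exact this
    · obtain ⟨Δ', -, hH⟩ := Hred hΔ
      rw [hH, hhsupp, mul_zero]
      rintro ⟨t, j, ⟨ht1, ht2⟩, ⟨hj1, hj2, hj3, hj4⟩, e⟩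
      apply hA
      have e' : mat p (mk2 p _ _ _ _ hΔ) = mat p t * mat p j := by rw [e, mat_mul]
      rw [mat_mk2] at e'
      have e00 := congrFun (congrFun e' 0) 0
      have e01 := congrFun (congrFun e' 0) 1
      have e10 := congrFun (congrFun e' 1) 0
      have e11 := congrFun (congrFun e' 1) 1
      simp [Matrix.mul_apply, Fin.sum_univ_two, ht1, ht2, hj1, hj2] at e00 e01 e10 e11
      rw [e00, e01, e10, e11, norm_mul, norm_mul]
      rw [_root_.zpow_neg, zpow_natCast] at hj4
      constructor
      · have : ‖mat p j 1 0‖ * (p : ℝ) ^ (k + 1) ≤ 1 := by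
          rwa [← le_div_iff₀ (by positivity), one_div]
        rw [mul_assoc]
        exact mul_le_of_le_one_right (norm_nonneg _) this
      · exact mul_le_of_le_one_right (norm_nonneg _) hj3
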